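/- Let d ≥ 1 and α = 1, and suppose the limit γ_d := lim_{N→∞} (1/log N) Σ_{0<‖z‖≤N} z₁ p(z) exists in ℝ. Then for every a ∈ ℝ^d and β ∈ ℝ, lim_{N→∞} (N/log N) · Σ_{z∈ℤ^d, z≠0} p(z) (e^{iβ(z·a)/N} − 1) = iβ a₁ γ_d, where a₁ is the first coordinate of a and the limit is in ℂ. -/

import Mathlib

/-- Euclidean norm of a point of `ℤ^d`. -/
noncomputable def znorm (d : ℕ) (z : Fin d → ℤ) : ℝ :=
  Real.sqrt (∑ i, ((z i : ℝ)) ^ 2)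

/-- The jump kernel `p(z) = ‖z‖^{-(d+α)} (2·1_{z₁>0} + 1_{z₁=0})`, `p(0) = 0`. -/
noncomputable def pker (d : ℕ) [NeZero d] (α : ℝ) (z : Fin d → ℤ) : ℝ :=
  if z = 0 then 0
  else znorm d z ^ (-((d : ℝ) + α)) *
    ((if 0 < z 0 then (2 : ℝ) else 0) + (if z 0 = 0 then 1 else 0))

open Finset in
/-- A nonnegative majorant on the shells of the cubes `[-n, n]^d` controls the sum over the
cube `[-n, n]^d`. -/
lemma sum_piFinset_Icc_le_of_shell_le (d : ℕ) (F : (Fin d → ℤ) → ℝ) (g : ℕ → ℝ)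
    (hg : ∀ k, 0 ≤ g k) (hF0 : F 0 = 0)
    (hF : ∀ (k : ℕ) (z : Fin d → ℤ), (∀ i, |z i| ≤ (k : ℤ) + 1) → (∃ i, (k : ℤ) + 1 ≤ |z i|) →
      F z ≤ g k) (n : ℕ) :
    ∑ z ∈ Fintype.piFinset (fun _ : Fin d ↦ Icc (-n : ℤ) n), F z ≤
      2 * d * 3 ^ (d - 1) * ∑ k ∈ range n, ((k : ℝ) + 1) ^ (d - 1) * g k := by
  let s (n : ℕ) := Fintype.piFinset fun _ : Fin d ↦ Icc (-n : ℤ) n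
  have hs0 : s 0 = {0} := by ext; simp [s, funext_iff]
  have hs {a b : ℕ} (ha : a ≤ b) : s a ⊆ s b := by grind
  have hcard (k : ℕ) : #(s (k + 1) \ s k) ≤ 2 * d * (2 * k + 3) ^ (d - 1) := by
    simp only [le_add_iff_nonneg_right, zero_le, hs, card_sdiff_of_subset, s, Fintype.card_piFinset,
      Int.card_Icc, prod_const, card_univ, Fintype.card_fin]
    grind [abs_pow_sub_pow_le (α := ℤ) (2 * k + 3) (2 * k + 1) d]
  calc ∑ z ∈ s n, F z
      = ∑ k ∈ range n, ∑ z ∈ (s (k + 1) \ s k), F z := by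
        simp [Finset.sum_eq_sum_range_sdiff _ @hs, hs0, hF0]
    _ ≤ ∑ k ∈ range n, ∑ z ∈ (s (k + 1) \ s k), g k := by
        refine sum_le_sum fun k _ ↦ sum_le_sum fun z hz ↦ ?_
        obtain ⟨h1, h2⟩ := mem_sdiff.mp hz
        refine hF k z (fun i ↦ ?_) ?_
        · have := Fintype.mem_piFinset.mp h1 i
          rw [mem_Icc] at this
          push_cast at this
          exact abs_le.mpr this
        · obtain ⟨j, hj⟩ : ∃ i, z i ∉ Icc (-k : ℤ) k := by simpa [s] using h2
          refine ⟨j, ?_⟩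
          by_contra! H
          rw [Int.lt_add_one_iff, abs_le, ← Finset.mem_Icc] at H
          exact hj H
    _ ≤ ∑ k ∈ range n, ↑(2 * d * (3 * (k + 1)) ^ (d - 1)) * g k := by
        simp only [sum_const, nsmul_eq_mul]
        refine sum_le_sum fun k _ ↦ mul_le_mul_of_nonneg_right ?_ (hg k)
        norm_cast
        refine (hcard k).trans ?_
        gcongr
        lia
    _ = 2 * d * 3 ^ (d - 1) * ∑ k ∈ range n, ((k : ℝ) + 1) ^ (d - 1) * g k := by
        rw [Finset.mul_sum]
        refine sum_congr rfl fun k _ ↦ ?_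
        push_cast
        rw [mul_pow]
        ring

open Finset in
/-- The truncated inverse square sum `∑ k⁻² min(1, (k/N)²)` is `O(1/N)`. -/
lemma sum_inv_sq_mul_min_le (N : ℕ) (hN : 1 ≤ N) (n : ℕ) :
    ∑ k ∈ range n, (((k : ℝ) + 1) ^ 2)⁻¹ * min 1 ((((k : ℝ) + 1) / (N : ℝ)) ^ 2) ≤ 3 / (N : ℝ) := by
  have hN' : (0 : ℝ) < N := by exact_mod_cast hN
  calc ∑ k ∈ range n, (((k : ℝ) + 1) ^ 2)⁻¹ * min 1 ((((k : ℝ) + 1) / (N : ℝ)) ^ 2)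
      ≤ ∑ k ∈ range n, ((if k < N then ((N : ℝ) ^ 2)⁻¹ else 0) +
          (if N ≤ k then (((k : ℝ) + 1) ^ 2)⁻¹ else 0)) := by
        refine sum_le_sum fun k _ ↦ ?_
        rcases lt_or_ge k N with h | h
        · simp only [h, if_true, not_le.mpr h, if_false, add_zero]
          calc _ ≤ (((k : ℝ) + 1) ^ 2)⁻¹ * (((k : ℝ) + 1) / N) ^ 2 := by
                gcongr; exact min_le_right _ _
            _ = _ := by field_simp
        · simp only [h, if_true, not_lt.mpr h, if_false, zero_add]
          exact mul_le_of_le_one_right (by positivity) (min_le_left _ _)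
    _ ≤ 1 / N + 2 / (N + 1) := by
        rw [sum_add_distrib]
        refine add_le_add ?_ ?_
        · rw [← sum_filter, sum_const, nsmul_eq_mul]
          have : #{k ∈ range n | k < N} ≤ N := by
            calc _ ≤ #(range N) := card_le_card fun k hk ↦ by simp at hk ⊢; exact hk.2
              _ = N := card_range N
          calc _ ≤ (N : ℝ) * ((N : ℝ) ^ 2)⁻¹ := by gcongr
            _ = 1 / N := by field_simp
        · refine le_trans (le_of_eq ?_) (sum_Ioo_inv_sq_le (α := ℝ) N (n + 1))
          rw [← sum_filter]
          refine sum_bij (fun k _ ↦ k + 1) ?_ ?_ ?_ ?_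
          · intro k hk; simp at hk ⊢; omega
          · intro a _ b _ h; simpa using h
          · intro b hb
            simp only [mem_Ioo] at hb
            exact ⟨b - 1, by simp; omega, by omega⟩
          · intro k _; push_cast; rfl
    _ ≤ 1 / N + 2 / N := by gcongr; linarith
    _ = 3 / N := by ring

lemma abs_le_znorm (d : ℕ) (z : Fin d → ℤ) (i : Fin d) : |(z i : ℝ)| ≤ znorm d z := by
  refine Real.abs_le_sqrt ?_
  exact Finset.single_le_sum (f := fun i ↦ (z i : ℝ) ^ 2) (fun _ _ ↦ sq_nonneg _)
    (Finset.mem_univ i)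

lemma znorm_nonneg (d : ℕ) (z : Fin d → ℤ) : 0 ≤ znorm d z := Real.sqrt_nonneg _

lemma znorm_le_of_forall_abs_le (d : ℕ) (hd : 1 ≤ d) (z : Fin d → ℤ) (m : ℝ)
    (h : ∀ i, |(z i : ℝ)| ≤ m) : znorm d z ≤ d * m := by
  have hm : 0 ≤ m := (abs_nonneg _).trans (h ⟨0, hd⟩)
  have hd' : (1 : ℝ) ≤ d := by exact_mod_cast hd
  refine Real.sqrt_le_iff.mpr ⟨by positivity, ?_⟩
  calc ∑ i, (z i : ℝ) ^ 2 ≤ ∑ _i : Fin d, m ^ 2 :=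
        Finset.sum_le_sum fun i _ ↦ sq_le_sq' (abs_le.mp (h i)).1 (abs_le.mp (h i)).2
    _ = d * m ^ 2 := by simp
    _ ≤ d * (d * m ^ 2) := le_mul_of_one_le_left (by positivity) hd'
    _ = (d * m) ^ 2 := by ring

lemma finite_znorm_le (d : ℕ) (R : ℝ) : {z : Fin d → ℤ | znorm d z ≤ R}.Finite := by
  refine (Set.finite_Icc (fun _ : Fin d ↦ -⌈R⌉) (fun _ ↦ ⌈R⌉)).subset fun z hz ↦ ?_
  have key (i : Fin d) : |z i| ≤ ⌈R⌉ := by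
    have := ((abs_le_znorm d z i).trans hz).trans (Int.le_ceil R)
    exact_mod_cast this
  exact ⟨fun i ↦ (abs_le.mp (key i)).1, fun i ↦ (abs_le.mp (key i)).2⟩

lemma pker_nonneg (d : ℕ) [NeZero d] (α : ℝ) (z : Fin d → ℤ) : 0 ≤ pker d α z := by
  have := znorm_nonneg d z
  unfold pker
  positivity

lemma pker_one_le (d : ℕ) [NeZero d] (z : Fin d → ℤ) (m : ℝ) (hm : 0 < m)
    (h : m ≤ znorm d z) : pker d 1 z ≤ 2 * (m ^ (d + 1))⁻¹ := by
  unfold pker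
  split_ifs with h0 h1 h2 h2
  · positivity
  all_goals
    have hr : znorm d z ^ (-((d : ℝ) + 1)) ≤ (m ^ (d + 1))⁻¹ := by
      rw [Real.rpow_neg (znorm_nonneg d z)]
      have : znorm d z ^ ((d : ℝ) + 1) = znorm d z ^ (d + 1) := by
        rw [← Real.rpow_natCast]; push_cast; rfl
      rw [this]
      gcongr
    have hr0 : 0 ≤ znorm d z ^ (-((d : ℝ) + 1)) := Real.rpow_nonneg (znorm_nonneg d z) _
    nlinarith

/-- The truncated second moment of the kernel is `O(1/N)`, uniformly over finite sets. -/
lemma exists_sum_pker_mul_min_le (d : ℕ) [NeZero d] :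
    ∃ C : ℝ, ∀ N : ℕ, 1 ≤ N → ∀ u : Finset (Fin d → ℤ),
      ∑ z ∈ u, pker d 1 z * min 1 ((znorm d z / (N : ℝ)) ^ 2) ≤ C / (N : ℝ) := by
  have hd : 1 ≤ d := NeZero.one_le
  have hd' : (1 : ℝ) ≤ d := by exact_mod_cast hd
  refine ⟨2 * d * 3 ^ (d - 1) * (2 * d ^ 2 * 3), fun N hN u ↦ ?_⟩
  have hN' : (0 : ℝ) < N := by exact_mod_cast hN
  have hnn (z : Fin d → ℤ) : 0 ≤ pker d 1 z * min 1 ((znorm d z / (N : ℝ)) ^ 2) :=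
    mul_nonneg (pker_nonneg d 1 z) (by positivity)
  obtain ⟨n, hn⟩ : ∃ n : ℕ, u ⊆ Fintype.piFinset fun _ : Fin d ↦ Finset.Icc (-n : ℤ) n := by
    refine ⟨∑ z ∈ u, ∑ i, (z i).natAbs, fun z hz ↦ Fintype.mem_piFinset.mpr fun i ↦ ?_⟩
    have h1 : (z i).natAbs ≤ ∑ i, (z i).natAbs :=
      Finset.single_le_sum (f := fun i ↦ (z i).natAbs) (fun _ _ ↦ Nat.zero_le _)
        (Finset.mem_univ i)
    have h2 : ∑ i, (z i).natAbs ≤ ∑ z ∈ u, ∑ i, (z i).natAbs :=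
      Finset.single_le_sum (f := fun z : Fin d → ℤ ↦ ∑ i, (z i).natAbs)
        (fun _ _ ↦ Nat.zero_le _) hz
    rw [Finset.mem_Icc]
    omega
  refine (Finset.sum_le_sum_of_subset_of_nonneg hn fun z _ _ ↦ hnn z).trans ?_
  refine (sum_piFinset_Icc_le_of_shell_le d _
    (fun k ↦ 2 * d ^ 2 * ((((k : ℝ) + 1) ^ (d + 1))⁻¹ * min 1 ((((k : ℝ) + 1) / (N : ℝ)) ^ 2)))
    (fun k ↦ by positivity) (by simp [pker]) ?_ n).trans ?_
  · rintro k z h1 ⟨j, hj⟩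
    have hlow : (k : ℝ) + 1 ≤ znorm d z := by
      refine le_trans ?_ (abs_le_znorm d z j)
      exact_mod_cast hj
    have hup : znorm d z ≤ d * ((k : ℝ) + 1) :=
      znorm_le_of_forall_abs_le d hd z _ fun i ↦ by exact_mod_cast h1 i
    have hp := pker_one_le d z ((k : ℝ) + 1) (by positivity) hlow
    have hm : min 1 ((znorm d z / (N : ℝ)) ^ 2) ≤ d ^ 2 * min 1 ((((k : ℝ) + 1) / (N : ℝ)) ^ 2) := by
      rw [mul_min_of_nonneg _ _ (by positivity)]
      refine min_le_min (by nlinarith) ?_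
      rw [← mul_pow, ← mul_div_assoc]
      have := znorm_nonneg d z
      gcongr
    calc _ ≤ 2 * (((k : ℝ) + 1) ^ (d + 1))⁻¹ * (d ^ 2 * min 1 ((((k : ℝ) + 1) / (N : ℝ)) ^ 2)) :=
          mul_le_mul hp hm (by positivity) (by positivity)
      _ = _ := by ring
  · rw [mul_div_assoc]
    refine mul_le_mul_of_nonneg_left ?_ (by positivity)
    calc _ = 2 * (d : ℝ) ^ 2 * ∑ k ∈ Finset.range n,
          (((k : ℝ) + 1) ^ 2)⁻¹ * min 1 ((((k : ℝ) + 1) / (N : ℝ)) ^ 2) := by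
          rw [Finset.mul_sum]
          refine Finset.sum_congr rfl fun k _ ↦ ?_
          have : ((k : ℝ) + 1) ^ (d + 1) = ((k : ℝ) + 1) ^ (d - 1) * ((k : ℝ) + 1) ^ 2 := by
            rw [← pow_add]; congr 1; omega
          rw [this, mul_inv]
          have h0 : ((k : ℝ) + 1) ^ (d - 1) ≠ 0 := by positivity
          field_simp
      _ ≤ 2 * (d : ℝ) ^ 2 * (3 / (N : ℝ)) :=
          mul_le_mul_of_nonneg_left (sum_inv_sq_mul_min_le N hN n) (by positivity)
      _ = _ := by ring

lemma norm_exp_I_mul_sub_one_sub_le (x : ℝ) :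
    ‖Complex.exp (Complex.I * x) - 1 - Complex.I * x‖ ≤ 2 * x ^ 2 := by
  have hx : ‖Complex.I * (x : ℂ)‖ = |x| := by simp
  rcases le_or_gt |x| 1 with h | h
  · have := Complex.norm_exp_sub_one_sub_id_le (x := Complex.I * x) (by rwa [hx])
    rw [hx, sq_abs] at this
    nlinarith [sq_nonneg x]
  · have h1 := Real.norm_exp_I_mul_ofReal_sub_one_le (x := x)
    rw [Real.norm_eq_abs] at h1
    have h2 := norm_sub_le (Complex.exp (Complex.I * x) - 1) (Complex.I * x)
    rw [hx] at h2
    nlinarith [sq_abs x]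

lemma norm_exp_I_mul_sub_one_le_two (x : ℝ) : ‖Complex.exp (Complex.I * x) - 1‖ ≤ 2 := by
  refine (norm_sub_le _ _).trans ?_
  rw [mul_comm, Complex.norm_exp_ofReal_mul_I, norm_one]
  norm_num

/-- The remainder after removing the linear part on the ball of radius `N` is dominated by the
truncated second moment. -/
lemma norm_exp_sub_one_sub_ite_le (x A r N : ℝ) (hN : 0 < N) (hr : 0 ≤ r)
    (hx : |x| ≤ A * (r / N)) :
    ‖Complex.exp (Complex.I * x) - 1 - (if r ≤ N then Complex.I * x else 0)‖ ≤
      (2 * A ^ 2 + 2) * min 1 ((r / N) ^ 2) := by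
  split_ifs with h
  · have h1 : r / N ≤ 1 := (div_le_one hN).mpr h
    have h0 : 0 ≤ r / N := by positivity
    rw [min_eq_right (by nlinarith)]
    have h2 : x ^ 2 ≤ (A * (r / N)) ^ 2 := sq_le_sq' (by linarith [(abs_le.mp hx).1])
      (abs_le.mp hx).2
    nlinarith [norm_exp_I_mul_sub_one_sub_le x, sq_nonneg (r / N)]
  · have h1 : 1 ≤ r / N := (one_le_div hN).mpr (not_le.mp h).le
    rw [min_eq_left (by nlinarith), sub_zero]
    nlinarith [norm_exp_I_mul_sub_one_le_two x, sq_nonneg A]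

/-- Reflection symmetry: the truncated first moments in all directions but the first vanish. -/
lemma tsum_coord_mul_pker_eq_zero (d : ℕ) [NeZero d] (R : ℝ) (i : Fin d) (hi : i ≠ 0) :
    ∑' z : Fin d → ℤ, (if z ≠ 0 ∧ znorm d z ≤ R then (z i : ℝ) * pker d 1 z else 0) = 0 := by
  let e : (Fin d → ℤ) ≃ (Fin d → ℤ) :=
    Equiv.piCongrRight fun j ↦ if j = i then Equiv.neg ℤ else Equiv.refl ℤ
  have hei (z : Fin d → ℤ) : e z i = -z i := by simp [e]
  have hej (z : Fin d → ℤ) (j : Fin d) (hj : j ≠ i) : e z j = z j := by simp [e, hj]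
  have hsq (z : Fin d → ℤ) (j : Fin d) : ((e z j : ℤ) : ℝ) ^ 2 = (z j : ℝ) ^ 2 := by
    by_cases hj : j = i
    · subst hj; rw [hei]; push_cast; ring
    · rw [hej z j hj]
  have hnorm (z : Fin d → ℤ) : znorm d (e z) = znorm d z := by simp only [znorm, hsq]
  have hzero (z : Fin d → ℤ) : e z = 0 ↔ z = 0 := by
    have h0 : e 0 = 0 := by
      funext j
      by_cases hj : j = i
      · subst hj; simp [hei]
      · simp [hej _ j hj]
    conv_lhs => rw [← h0]
    exact e.apply_eq_iff_eq
  have hp (z : Fin d → ℤ) : pker d 1 (e z) = pker d 1 z := by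
    simp only [pker, hzero, hnorm, hej z 0 hi.symm]
  have h := e.tsum_eq
    (fun z ↦ if z ≠ 0 ∧ znorm d z ≤ R then (z i : ℝ) * pker d 1 z else 0)
  simp only [ne_eq, hzero, hnorm, hp, hei, Int.cast_neg, neg_mul] at h
  have h2 : ∀ z : Fin d → ℤ, (if ¬z = 0 ∧ znorm d z ≤ R then -((z i : ℝ) * pker d 1 z) else 0) =
      -(if ¬z = 0 ∧ znorm d z ≤ R then (z i : ℝ) * pker d 1 z else 0) := by
    intro z; split_ifs <;> simp
  simp only [h2, tsum_neg] at h
  simp only [ne_eq]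
  linarith

lemma summable_ite_znorm_le {E : Type*} [AddCommGroup E] [TopologicalSpace E] (d : ℕ) (R : ℝ)
    (f : (Fin d → ℤ) → E) :
    Summable fun z ↦ if z ≠ 0 ∧ znorm d z ≤ R then f z else 0 := by
  refine summable_of_hasFiniteSupport ((finite_znorm_le d R).subset fun z hz ↦ ?_)
  by_contra h
  exact hz (if_neg fun h' ↦ h h'.2)

/-- Only the first coordinate contributes to the truncated first moment. -/
lemma tsum_pker_mul_linear (d : ℕ) [NeZero d] (R : ℝ) (a : Fin d → ℝ) :
    ∑' z : Fin d → ℤ,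
        (if z ≠ 0 ∧ znorm d z ≤ R then pker d 1 z * ∑ i, (z i : ℝ) * a i else 0) =
      a 0 * ∑' z : Fin d → ℤ,
        (if z ≠ 0 ∧ znorm d z ≤ R then (z 0 : ℝ) * pker d 1 z else 0) := by
  have h (z : Fin d → ℤ) :
      (if z ≠ 0 ∧ znorm d z ≤ R then pker d 1 z * ∑ i, (z i : ℝ) * a i else 0) =
      ∑ i, a i * (if z ≠ 0 ∧ znorm d z ≤ R then (z i : ℝ) * pker d 1 z else 0) := by
    split_ifs
    · rw [Finset.mul_sum]
      exact Finset.sum_congr rfl fun i _ ↦ by ring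
    · simp
  simp only [h]
  have hsum (i : Fin d) : Summable fun z : Fin d → ℤ ↦
      a i * (if z ≠ 0 ∧ znorm d z ≤ R then (z i : ℝ) * pker d 1 z else 0) :=
    (summable_ite_znorm_le d R fun z ↦ (z i : ℝ) * pker d 1 z).mul_left (a i)
  rw [Summable.tsum_finsetSum fun i _ ↦ hsum i]
  simp only [tsum_mul_left]
  refine Finset.sum_eq_single 0 (fun i _ hi ↦ ?_) (by simp)
  rw [tsum_coord_mul_pker_eq_zero d R i hi, mul_zero]

/-- The exponential sum agrees with its truncated linear part up to `O(1/N)`. -/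
lemma exists_norm_tsum_sub_linear_le (d : ℕ) [NeZero d] (a : Fin d → ℝ) (β : ℝ) :
    ∃ C : ℝ, ∀ N : ℕ, 1 ≤ N →
      ‖(∑' z : Fin d → ℤ, (pker d 1 z : ℂ) *
          (Complex.exp (Complex.I * (β : ℂ) * ((∑ i, (z i : ℝ) * a i : ℝ) : ℂ) / (N : ℂ)) - 1)) -
        Complex.I * (β : ℂ) / (N : ℂ) * ((a 0 * ∑' z : Fin d → ℤ,
          (if z ≠ 0 ∧ znorm d z ≤ (N : ℝ) then (z 0 : ℝ) * pker d 1 z else 0) : ℝ) : ℂ)‖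
        ≤ C / N := by
  obtain ⟨C, hC⟩ := exists_sum_pker_mul_min_le d
  set A : ℝ := |β| * ∑ i, |a i| with hA
  refine ⟨(2 * A ^ 2 + 2) * C, fun N hN ↦ ?_⟩
  have hN' : (0 : ℝ) < N := by exact_mod_cast hN
  set w : (Fin d → ℤ) → ℝ := fun z ↦ pker d 1 z * min 1 ((znorm d z / (N : ℝ)) ^ 2) with hw
  have hw0 (z : Fin d → ℤ) : 0 ≤ w z := mul_nonneg (pker_nonneg d 1 z) (by positivity)
  have hws : Summable w := summable_of_sum_le hw0 (hC N hN)
  have hwt : ∑' z, w z ≤ C / N := hws.tsum_le_of_sum_le (hC N hN)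
  set x : (Fin d → ℤ) → ℝ := fun z ↦ β * (∑ i, (z i : ℝ) * a i) / N with hx
  have hxe (z : Fin d → ℤ) :
      Complex.I * (β : ℂ) * ((∑ i, (z i : ℝ) * a i : ℝ) : ℂ) / (N : ℂ) = Complex.I * (x z : ℂ) := by
    simp only [hx]; push_cast; ring
  have hxb (z : Fin d → ℤ) : |x z| ≤ A * (znorm d z / N) := by
    have h1 : |∑ i, (z i : ℝ) * a i| ≤ znorm d z * ∑ i, |a i| := by
      rw [Finset.mul_sum]
      refine (Finset.abs_sum_le_sum_abs _ _).trans (Finset.sum_le_sum fun i _ ↦ ?_)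
      rw [abs_mul]
      exact mul_le_mul_of_nonneg_right (abs_le_znorm d z i) (abs_nonneg _)
    simp only [hx, hA, abs_div, abs_mul, Nat.abs_cast]
    calc _ ≤ |β| * (znorm d z * ∑ i, |a i|) / N := by gcongr
      _ = _ := by ring
  set lin : (Fin d → ℤ) → ℂ := fun z ↦
    if z ≠ 0 ∧ znorm d z ≤ N then (pker d 1 z : ℂ) * (Complex.I * (x z : ℂ)) else 0 with hlin
  set full : (Fin d → ℤ) → ℂ := fun z ↦
    (pker d 1 z : ℂ) * (Complex.exp (Complex.I * (x z : ℂ)) - 1) with hfull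
  have hbd (z : Fin d → ℤ) : ‖full z - lin z‖ ≤ (2 * A ^ 2 + 2) * w z := by
    by_cases hz : z = 0
    · subst hz; simp [hfull, hlin, hw, pker]
    have : full z - lin z = (pker d 1 z : ℂ) * (Complex.exp (Complex.I * (x z : ℂ)) - 1 -
        (if znorm d z ≤ N then Complex.I * (x z : ℂ) else 0)) := by
      simp only [hfull, hlin, hz, ne_eq, not_false_eq_true, true_and]
      split_ifs <;> ring
    rw [this, norm_mul, Complex.norm_real, Real.norm_of_nonneg (pker_nonneg d 1 z)]
    calc _ ≤ pker d 1 z * ((2 * A ^ 2 + 2) * min 1 ((znorm d z / (N : ℝ)) ^ 2)) :=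
          mul_le_mul_of_nonneg_left
            (norm_exp_sub_one_sub_ite_le _ A _ _ hN' (znorm_nonneg d z) (hxb z))
            (pker_nonneg d 1 z)
      _ = _ := by simp only [hw]; ring
  have hdiff : Summable fun z ↦ full z - lin z := .of_norm_bounded (hws.mul_left _) hbd
  have hlins : Summable lin := summable_ite_znorm_le d N _
  have hlint : ∑' z, lin z = Complex.I * (β : ℂ) / (N : ℂ) * ((a 0 * ∑' z : Fin d → ℤ,
      (if z ≠ 0 ∧ znorm d z ≤ (N : ℝ) then (z 0 : ℝ) * pker d 1 z else 0) : ℝ) : ℂ) := by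
    rw [← tsum_pker_mul_linear, Complex.ofReal_tsum, ← tsum_mul_left]
    refine tsum_congr fun z ↦ ?_
    simp only [hlin, hx]
    split_ifs
    · push_cast; ring
    · simp
  have hfulls : Summable full := by simpa using hdiff.add hlins
  simp only [hxe]
  rw [← hlint, ← hfulls.tsum_sub hlins]
  refine (tsum_of_norm_bounded (hws.mul_left _).hasSum hbd).trans ?_
  rw [tsum_mul_left, mul_div_assoc]
  exact mul_le_mul_of_nonneg_left hwt (by positivity)


/-- for `α = 1`, if `γ_d = lim_{N→∞} (1/log N) Σ_{0<‖z‖≤N} z₁ p(z)` exists,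
then `lim_{N→∞} (N/log N) Σ_{z≠0} p(z)(e^{iβ(z·a)/N} − 1) = iβ a₁ γ_d`. -/
theorem statement7 (d : ℕ) [NeZero d] (hd : 1 ≤ d) (γ : ℝ)
    (hγ : Filter.Tendsto
      (fun N : ℕ => (Real.log N)⁻¹ *
        ∑' z : Fin d → ℤ,
          (if z ≠ 0 ∧ znorm d z ≤ (N : ℝ) then (z 0 : ℝ) * pker d 1 z else 0))
      Filter.atTop (nhds γ))
    (a : Fin d → ℝ) (β : ℝ) :
    Filter.Tendsto
      (fun N : ℕ => (((N : ℝ) / Real.log N : ℝ) : ℂ) *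
        ∑' z : Fin d → ℤ, (pker d 1 z : ℂ) *
          (Complex.exp (Complex.I * (β : ℂ) * ((∑ i, (z i : ℝ) * a i : ℝ) : ℂ) / (N : ℂ)) - 1))
      Filter.atTop
      (nhds (Complex.I * (β : ℂ) * ((a 0 : ℝ) : ℂ) * ((γ : ℝ) : ℂ))) := by
  obtain ⟨C, hC⟩ := exists_norm_tsum_sub_linear_le d a β
  set L : ℕ → ℝ := fun N ↦ ∑' z : Fin d → ℤ,
    (if z ≠ 0 ∧ znorm d z ≤ (N : ℝ) then (z 0 : ℝ) * pker d 1 z else 0) with hL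
  have hlin : Filter.Tendsto (fun N : ℕ ↦
      Complex.I * (β : ℂ) * ((a 0 : ℝ) : ℂ) * (((Real.log N)⁻¹ * L N : ℝ) : ℂ)) Filter.atTop
      (nhds (Complex.I * (β : ℂ) * ((a 0 : ℝ) : ℂ) * ((γ : ℝ) : ℂ))) :=
    ((Complex.continuous_ofReal.tendsto γ).comp hγ).const_mul _
  have hlog : Filter.Tendsto (fun N : ℕ ↦ C / Real.log N) Filter.atTop (nhds 0) :=
    (Real.tendsto_log_atTop.comp tendsto_natCast_atTop_atTop).const_div_atTop C
  refine hlin.congr_dist (squeeze_zero' (.of_forall fun _ ↦ dist_nonneg) ?_ hlog)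
  filter_upwards [Filter.eventually_ge_atTop 2] with N hN
  have hN' : (0 : ℝ) < N := by positivity
  have hlogN : 0 < Real.log N := Real.log_pos (by exact_mod_cast hN)
  have hNC : (N : ℂ) ≠ 0 := by exact_mod_cast hN'.ne'
  have hlogC : (Real.log N : ℂ) ≠ 0 := by exact_mod_cast hlogN.ne'
  have hfac : Complex.I * (β : ℂ) * ((a 0 : ℝ) : ℂ) * (((Real.log N)⁻¹ * L N : ℝ) : ℂ) =
      (((N : ℝ) / Real.log N : ℝ) : ℂ) *
        (Complex.I * (β : ℂ) / (N : ℂ) * ((a 0 * L N : ℝ) : ℂ)) := by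
    push_cast
    rw [Complex.ofReal_log hN'.le] at hlogC
    push_cast at hlogC
    field_simp
  rw [dist_comm, dist_eq_norm, hfac, ← mul_sub, norm_mul, Complex.norm_real,
    Real.norm_of_nonneg (by positivity)]
  calc _ ≤ (N : ℝ) / Real.log N * (C / N) :=
        mul_le_mul_of_nonneg_left (hC N (by omega)) (by positivity)
    _ = C / Real.log N := by field_simp
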